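/- Let G be a finite simple graph with adjacency matrix A (over the reals). Let s⁺ and s⁻ denote the sum of the squares of the positive and of the negative eigenvalues of A, respectively, and let χvec(G) be the vector chromatic number of G. Then s⁻ ≤ (χvec(G) − 1) · s⁺. -/

import Mathlib

open Matrix Finset BigOperators

/-- The Frobenius (trace) inner product of two real matrices. -/
noncomputable def frob {n : ℕ} (M N : Matrix (Fin n) (Fin n) ℝ) : ℝ :=
  ∑ u, ∑ v, M u v * N u v

/-- The all-ones matrix. -/
noncomputable def matJ (n : ℕ) : Matrix (Fin n) (Fin n) ℝ :=
  Matrix.of fun _ _ => (1 : ℝ)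

/-- The vector chromatic number of `G`: the supremum of `⟨J, Z⟩` over all real symmetric,
entrywise nonnegative, positive semidefinite matrices `Z` with trace `1` whose entries vanish
on distinct non-adjacent pairs of vertices. -/
noncomputable def chiVec {n : ℕ} (G : SimpleGraph (Fin n)) [DecidableRel G.Adj] : ℝ :=
  sSup { x : ℝ | ∃ Z : Matrix (Fin n) (Fin n) ℝ,
    Z.IsSymm ∧ (∀ u v, 0 ≤ Z u v) ∧ Z.PosSemidef ∧ Z.trace = 1 ∧
    (∀ u v, u ≠ v → ¬ G.Adj u v → Z u v = 0) ∧ x = frob (matJ n) Z }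

/-- The adjacency matrix of a graph is hermitian (it is real symmetric). -/
theorem adjHerm {n : ℕ} (G : SimpleGraph (Fin n)) [DecidableRel G.Adj] :
    (G.adjMatrix ℝ).IsHermitian :=
  (Matrix.conjTranspose_eq_transpose_of_trivial _).trans G.isSymm_adjMatrix

/-- `s⁺`: the sum of the squares of the positive eigenvalues of the adjacency matrix,
counted with multiplicity. -/
noncomputable def sPlus {n : ℕ} (G : SimpleGraph (Fin n)) [DecidableRel G.Adj] : ℝ :=
  ∑ i, if 0 < (adjHerm G).eigenvalues i then ((adjHerm G).eigenvalues i) ^ 2 else 0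

/-- `s⁻`: the sum of the squares of the negative eigenvalues of the adjacency matrix,
counted with multiplicity. -/
noncomputable def sMinus {n : ℕ} (G : SimpleGraph (Fin n)) [DecidableRel G.Adj] : ℝ :=
  ∑ i, if (adjHerm G).eigenvalues i < 0 then ((adjHerm G).eigenvalues i) ^ 2 else 0

/-- `A⁺ = Σ_{θ>0} θ E_θ`: the positive part of the adjacency matrix, obtained from its
spectral decomposition. -/
noncomputable def Aplus {n : ℕ} (G : SimpleGraph (Fin n)) [DecidableRel G.Adj] :
    Matrix (Fin n) (Fin n) ℝ :=
  ((adjHerm G).eigenvectorUnitary : Matrix (Fin n) (Fin n) ℝ) *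
    diagonal (fun i => if 0 < (adjHerm G).eigenvalues i then (adjHerm G).eigenvalues i else 0) *
    star ((adjHerm G).eigenvectorUnitary : Matrix (Fin n) (Fin n) ℝ)

/-- `A⁻ = -Σ_{λ<0} λ E_λ`: the negative part of the adjacency matrix, obtained from its
spectral decomposition. -/
noncomputable def Aminus {n : ℕ} (G : SimpleGraph (Fin n)) [DecidableRel G.Adj] :
    Matrix (Fin n) (Fin n) ℝ :=
  ((adjHerm G).eigenvectorUnitary : Matrix (Fin n) (Fin n) ℝ) *
    diagonal (fun i => if (adjHerm G).eigenvalues i < 0 then -(adjHerm G).eigenvalues i else 0) *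
    star ((adjHerm G).eigenvectorUnitary : Matrix (Fin n) (Fin n) ℝ)


lemma frob_eq_trace {n : ℕ} (M N : Matrix (Fin n) (Fin n) ℝ) :
    frob M N = (M * Nᵀ).trace := by
  simp [frob, Matrix.trace, Matrix.mul_apply]

lemma frob_conj {n : ℕ} (U : unitary (Matrix (Fin n) (Fin n) ℝ)) (d e : Fin n → ℝ) :
    frob ((U : Matrix (Fin n) (Fin n) ℝ) * diagonal d * star (U : Matrix (Fin n) (Fin n) ℝ))
      ((U : Matrix (Fin n) (Fin n) ℝ) * diagonal e * star (U : Matrix (Fin n) (Fin n) ℝ))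
      = ∑ i, d i * e i := by
  have hU : star (U : Matrix (Fin n) (Fin n) ℝ) * (U : Matrix (Fin n) (Fin n) ℝ) = 1 :=
    Unitary.coe_star_mul_self U
  generalize (U : Matrix (Fin n) (Fin n) ℝ) = V at *
  have hs : star V = Vᵀ := by
    rw [star_eq_conjTranspose, conjTranspose_eq_transpose_of_trivial]
  rw [hs] at hU ⊢
  rw [frob_eq_trace]
  have : V * diagonal d * Vᵀ * (V * diagonal e * Vᵀ)ᵀ
      = V * (diagonal d * diagonal e) * Vᵀ := by
    simp only [transpose_mul, transpose_transpose, diagonal_transpose]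
    calc V * diagonal d * Vᵀ * (V * (diagonal e * Vᵀ))
        = V * diagonal d * (Vᵀ * V) * (diagonal e * Vᵀ) := by simp only [Matrix.mul_assoc]
      _ = _ := by rw [hU]; simp only [Matrix.mul_assoc, Matrix.one_mul]
  rw [this, Matrix.trace_mul_comm, ← Matrix.mul_assoc, hU, Matrix.one_mul, diagonal_mul_diagonal,
    trace_diagonal]

lemma conj_posSemidef {n : ℕ} (V : Matrix (Fin n) (Fin n) ℝ) (d : Fin n → ℝ) (hd : 0 ≤ d) :
    (V * diagonal d * star V).PosSemidef :=
  (PosSemidef.diagonal hd).mul_mul_conjTranspose_same V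

lemma Aplus_psd {n : ℕ} (G : SimpleGraph (Fin n)) [DecidableRel G.Adj] :
    (Aplus G).PosSemidef := by
  refine conj_posSemidef _ _ fun i => ?_
  dsimp only [Pi.zero_apply]
  split_ifs with h
  · exact h.le
  · exact le_rfl

lemma Aminus_psd {n : ℕ} (G : SimpleGraph (Fin n)) [DecidableRel G.Adj] :
    (Aminus G).PosSemidef := by
  refine conj_posSemidef _ _ fun i => ?_
  dsimp only [Pi.zero_apply]
  split_ifs with h
  · linarith
  · exact le_rfl

lemma Aplus_sub_Aminus {n : ℕ} (G : SimpleGraph (Fin n)) [DecidableRel G.Adj] :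
    Aplus G - Aminus G = G.adjMatrix ℝ := by
  conv_rhs => rw [(adjHerm G).spectral_theorem, Unitary.conjStarAlgAut_apply]
  rw [Aplus, Aminus, ← Matrix.sub_mul, ← Matrix.mul_sub, diagonal_sub]
  congr 3
  ext i
  simp only [Function.comp, RCLike.ofReal_real_eq_id, id]
  split_ifs <;> linarith

lemma frob_pp {n : ℕ} (G : SimpleGraph (Fin n)) [DecidableRel G.Adj] :
    frob (Aplus G) (Aplus G) = sPlus G := by
  rw [Aplus, frob_conj, sPlus]
  refine sum_congr rfl fun i _ => ?_
  split_ifs <;> ring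

lemma frob_mm {n : ℕ} (G : SimpleGraph (Fin n)) [DecidableRel G.Adj] :
    frob (Aminus G) (Aminus G) = sMinus G := by
  rw [Aminus, frob_conj, sMinus]
  refine sum_congr rfl fun i _ => ?_
  split_ifs <;> ring

lemma frob_pm {n : ℕ} (G : SimpleGraph (Fin n)) [DecidableRel G.Adj] :
    frob (Aplus G) (Aminus G) = 0 := by
  rw [Aplus, Aminus, frob_conj]
  refine sum_eq_zero fun i _ => ?_
  split_ifs <;> first | (exfalso; linarith) | simp

lemma quad_eq {n : ℕ} (M : Matrix (Fin n) (Fin n) ℝ) (x : Fin n → ℝ) :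
    star x ⬝ᵥ (M *ᵥ x) = ∑ u, ∑ v, M u v * x u * x v := by
  simp only [dotProduct, mulVec, star_trivial, mul_sum]
  refine sum_congr rfl fun u _ => sum_congr rfl fun v _ => by ring

/-- The defining set of `chiVec` is bounded above. -/
lemma chi_bdd {n : ℕ} (G : SimpleGraph (Fin n)) [DecidableRel G.Adj] :
    BddAbove { x : ℝ | ∃ Z : Matrix (Fin n) (Fin n) ℝ,
    Z.IsSymm ∧ (∀ u v, 0 ≤ Z u v) ∧ Z.PosSemidef ∧ Z.trace = 1 ∧
    (∀ u v, u ≠ v → ¬ G.Adj u v → Z u v = 0) ∧ x = frob (matJ n) Z } := by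
  refine ⟨∑ _u : Fin n, ∑ _v : Fin n, 1, ?_⟩
  rintro x ⟨Z, hs, h0, hp, ht, -, rfl⟩
  unfold frob
  refine sum_le_sum fun u _ => sum_le_sum fun v _ => ?_
  simp only [matJ, of_apply, one_mul]
  have hd : ∀ w, Z w w ≤ 1 := fun w => by
    rw [← ht]
    exact single_le_sum (f := fun i => Z i i) (fun i _ => h0 i i) (mem_univ w)
  have hq := hp.dotProduct_mulVec_nonneg (Pi.single u 1 - Pi.single v 1)
  have hsym : Z v u = Z u v := hs.apply u v
  simp [mulVec_sub, sub_dotProduct, dotProduct_sub] at hq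
  have := hd u
  have := hd v
  linarith

/-- The Laplacian-like matrix with weights `c` is positive semidefinite. -/
lemma lap_psd {n : ℕ} (c : Fin n → Fin n → ℝ) (hc : ∀ u v, 0 ≤ c u v)
    (hs : ∀ u v, c u v = c v u) :
    (diagonal (fun u => ∑ w, c u w) - of c : Matrix (Fin n) (Fin n) ℝ).PosSemidef := by
  refine .of_dotProduct_mulVec_nonneg ?_ fun x => ?_
  · rw [IsHermitian, conjTranspose_eq_transpose_of_trivial, transpose_sub, diagonal_transpose]
    congr 1
    ext u v
    exact hs v u
  · have h1 : star x ⬝ᵥ ((diagonal (fun u => ∑ w, c u w) - of c) *ᵥ x)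
        = ∑ u, ∑ v, c u v * (x u * x u - x u * x v) := by
      rw [sub_mulVec, dotProduct_sub, quad_eq (of c)]
      simp only [dotProduct, mulVec_diagonal, star_trivial, of_apply, ← sum_sub_distrib,
        mul_sum, sum_mul]
      refine sum_congr rfl fun u _ => sum_congr rfl fun v _ => by ring
    have h2 : ∑ u, ∑ v, c u v * (x u * x u - x u * x v)
        = ∑ u, ∑ v, c u v * (x v * x v - x u * x v) := by
      rw [sum_comm]
      refine sum_congr rfl fun u _ => sum_congr rfl fun v _ => by rw [hs v u]; ring
    have h3 : ∑ u, ∑ v, c u v * (x u * x u - x u * x v)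
        + ∑ u, ∑ v, c u v * (x v * x v - x u * x v) = ∑ u, ∑ v, c u v * (x u - x v) ^ 2 := by
      simp only [← sum_add_distrib]
      refine sum_congr rfl fun u _ => sum_congr rfl fun v _ => by ring
    have h4 : 0 ≤ ∑ u, ∑ v, c u v * (x u - x v) ^ 2 :=
      sum_nonneg fun u _ => sum_nonneg fun v _ => mul_nonneg (hc u v) (sq_nonneg _)
    rw [h1]
    linarith

/-- The sum of squares of `Y` over non-adjacent pairs (including the diagonal). -/
noncomputable def wSum {n : ℕ} (G : SimpleGraph (Fin n)) [DecidableRel G.Adj]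
    (Y : Matrix (Fin n) (Fin n) ℝ) : ℝ :=
  ∑ u, ∑ v, if G.Adj u v then 0 else Y u v ^ 2

lemma key {n : ℕ} (G : SimpleGraph (Fin n)) [DecidableRel G.Adj]
    (Y : Matrix (Fin n) (Fin n) ℝ) (hY : Y.PosSemidef) (hW : 0 < wSum G Y) :
    frob Y Y ≤ chiVec G * wSum G Y := by
  have hsy : ∀ u v, Y u v = Y v u := fun u v => by
    have := hY.1.apply u v
    simpa using this.symm
  set c : Fin n → Fin n → ℝ := fun u v => if G.Adj u v then 0 else Y u v ^ 2 with hc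
  have hc0 : ∀ u v, 0 ≤ c u v := fun u v => by
    simp only [hc]; split_ifs <;> positivity
  have hcs : ∀ u v, c u v = c v u := fun u v => by
    simp only [hc, G.adj_comm u v, hsy u v]
  set Z : Matrix (Fin n) (Fin n) ℝ := Y ⊙ Y + (diagonal (fun u => ∑ w, c u w) - of c) with hZ
  have hZp : Z.PosSemidef := (hY.hadamard hY).add (lap_psd c hc0 hcs)
  have hZt : Z.trace = wSum G Y := by
    simp only [hZ, trace_add, trace_sub, trace_diagonal, wSum]
    have : (Y ⊙ Y).trace = (of c : Matrix (Fin n) (Fin n) ℝ).trace := by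
      simp [Matrix.trace, hc, sq]
    rw [this]; simp [hc]
  have hZJ : frob (matJ n) Z = frob Y Y := by
    simp only [frob, matJ, of_apply, one_mul, hZ, Matrix.add_apply, Matrix.sub_apply, hadamard_apply,
      sum_add_distrib, sum_sub_distrib, diagonal_apply, sum_ite_eq, mem_univ, if_true]
    simp
  have hZn : ∀ u v, u ≠ v → ¬ G.Adj u v → Z u v = 0 := fun u v h1 h2 => by
    simp [hZ, hc, h1, h2, sq]
  have hZ0 : ∀ u v, 0 ≤ Z u v := fun u v => by
    by_cases h : u = v
    · subst h
      exact hZp.diag_nonneg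
    · by_cases h2 : G.Adj u v
      · simp [hZ, hc, h, h2, mul_self_nonneg]
      · rw [hZn u v h h2]
  have hmem := le_csSup (chi_bdd G) (a := frob Y Y / wSum G Y)
    ⟨(wSum G Y)⁻¹ • Z, ?_, ?_, ?_, ?_, ?_, ?_⟩
  · rw [div_le_iff₀ hW] at hmem
    exact hmem
  · ext u v
    have := hZp.1.apply u v
    simp only [star_trivial] at this
    simp [this]
  · exact fun u v => mul_nonneg (inv_nonneg.2 hW.le) (hZ0 u v)
  · exact hZp.smul (inv_nonneg.2 hW.le)
  · rw [trace_smul, hZt, smul_eq_mul, inv_mul_cancel₀ hW.ne']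
  · intro u v h1 h2
    simp [hZn u v h1 h2]
  · rw [← hZJ]
    simp only [frob, matJ, of_apply, one_mul, Matrix.smul_apply, smul_eq_mul, ← mul_sum]
    rw [div_eq_inv_mul]

lemma main_abs {n : ℕ} (G : SimpleGraph (Fin n)) [DecidableRel G.Adj]
    (X Y : Matrix (Fin n) (Fin n) ℝ) (hX : X.PosSemidef) (hY : Y.PosSemidef)
    (hA : X - Y = G.adjMatrix ℝ) (hXY : frob X Y = 0) :
    frob Y Y ≤ (chiVec G - 1) * frob X X := by
  have hadj : ∀ u v, G.Adj u v → X u v = Y u v + 1 := fun u v h => by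
    have := congrFun (congrFun hA u) v
    simp [h] at this
    linarith
  have hnadj : ∀ u v, ¬ G.Adj u v → X u v = Y u v := fun u v h => by
    have := congrFun (congrFun hA u) v
    simp [h] at this
    linarith
  have hW0 : 0 ≤ wSum G Y := sum_nonneg fun u _ => sum_nonneg fun v _ => by
    split_ifs <;> positivity
  rcases hW0.eq_or_lt with hW | hW
  · have hYd : ∀ u, Y u u = 0 := fun u => by
      have h1 := (sum_eq_zero_iff_of_nonneg (fun u _ => sum_nonneg fun v _ => by
        split_ifs <;> positivity)).1 hW.symm u (mem_univ u)
      have h2 := (sum_eq_zero_iff_of_nonneg (fun v _ => by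
        split_ifs <;> positivity)).1 h1 u (mem_univ u)
      simpa using h2
    have hXd : ∀ u, X u u = 0 := fun u => by rw [hnadj u u (G.irrefl), hYd]
    have hY0 : Y = 0 := hY.trace_eq_zero_iff.1 (by simp [Matrix.trace, hYd])
    have hX0 : X = 0 := hX.trace_eq_zero_iff.1 (by simp [Matrix.trace, hXd])
    simp [hX0, hY0, frob]
  · have hk := key G Y hY hW
    set W := wSum G Y with hWd
    set P : ℝ := ∑ u, ∑ v, if G.Adj u v then X u v ^ 2 else 0 with hP
    set Q : ℝ := ∑ u, ∑ v, if G.Adj u v then Y u v ^ 2 else 0 with hQ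
    set R : ℝ := ∑ u, ∑ v, if G.Adj u v then X u v * Y u v else 0 with hR
    have eX : frob X X = W + P := by
      simp only [frob, hWd, wSum, hP, ← sum_add_distrib]
      refine sum_congr rfl fun u _ => sum_congr rfl fun v _ => ?_
      split_ifs with h
      · ring
      · rw [hnadj u v h]; ring
    have eY : frob Y Y = W + Q := by
      simp only [frob, hWd, wSum, hQ, ← sum_add_distrib]
      refine sum_congr rfl fun u _ => sum_congr rfl fun v _ => ?_
      split_ifs with h <;> ring
    have eXY : 0 = W + R := by
      rw [← hXY]
      simp only [frob, hWd, wSum, hR, ← sum_add_distrib]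
      refine sum_congr rfl fun u _ => sum_congr rfl fun v _ => ?_
      split_ifs with h
      · ring
      · rw [hnadj u v h]; ring
    have cs : R ^ 2 ≤ P * Q := by
      have := sum_mul_sq_le_sq_mul_sq (univ : Finset (Fin n × Fin n))
        (fun p => if G.Adj p.1 p.2 then X p.1 p.2 else 0)
        (fun p => if G.Adj p.1 p.2 then Y p.1 p.2 else 0)
      simp only [Fintype.sum_prod_type] at this
      have e1 : ∀ M N : Matrix (Fin n) (Fin n) ℝ, ∀ u v,
          (if G.Adj u v then M u v else 0) * (if G.Adj u v then N u v else 0)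
            = if G.Adj u v then M u v * N u v else 0 := fun M N u v => by
        split_ifs <;> simp
      simp only [sq, e1] at this
      simp only [hP, hQ, hR, sq]
      exact this
    have hP0 : 0 ≤ P := sum_nonneg fun u _ => sum_nonneg fun v _ => by
      split_ifs <;> positivity
    rw [eX]
    rw [eY] at hk ⊢
    have hRW : R = -W := by linarith
    rw [hRW] at cs
    have h1 : Q ≤ (chiVec G - 1) * W := by linarith
    have h2 : W * W ≤ (chiVec G - 1) * P * W := by nlinarith
    have h3 : W ≤ (chiVec G - 1) * P := le_of_mul_le_mul_right h2 hW
    linarith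

/-- For every graph `G`, `s⁻ ≤ (χvec(G) − 1) · s⁺`. -/
theorem sMinus_le_chiVec_sub_one_mul_sPlus {n : ℕ} (G : SimpleGraph (Fin n))
    [DecidableRel G.Adj] :
    sMinus G ≤ (chiVec G - 1) * sPlus G := by
  rw [← frob_mm, ← frob_pp]
  exact main_abs G _ _ (Aplus_psd G) (Aminus_psd G) (Aplus_sub_Aminus G) (frob_pm G)
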